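/- arXiv:1701.02868 — 2 statements merged into one kernel-verified Lean document; each statement's English description precedes it below -/
import Mathlib

section
/- Let G be a simple graph on X = {x_1,…,x_n}, let k be a positive integer, and let G' be the graph obtained from G by duplicating each vertex k−1 times, i.e., V(G') = {x_{ij} : 1 ≤ i ≤ n, 1 ≤ j ≤ k} and E(G') = {x_{ir}x_{js} : x_ix_j ∈ E(G), 1 ≤ r,s ≤ k}. Then G is shellable if and only if G' is k-shellable. -/
/-- An abstract simplicial complex on vertex type `V`: a collection of finite subsets
(faces) closed under taking subsets. -/
def IsComplex {V : Type*} (Δ : Set (Finset V)) : Prop :=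
  ∀ ⦃F G : Finset V⦄, F ∈ Δ → G ⊆ F → G ∈ Δ

/-- The facets (maximal faces) of a collection of finite sets. -/
def facets {V : Type*} (Δ : Set (Finset V)) : Set (Finset V) :=
  {F | F ∈ Δ ∧ ∀ G ∈ Δ, F ⊆ G → F = G}

/-- The faces of the subcomplex `⟨F j⟩ ∩ ⟨F 0, …, F (j-1)⟩` determined by a list
`F 0, …, F (r-1)` of facets. -/
def interFace {V : Type*} {r : ℕ} (F : Fin r → Finset V) (j : Fin r) (G : Finset V) : Prop :=
  G ⊆ F j ∧ ∃ i : Fin r, (i : ℕ) < (j : ℕ) ∧ G ⊆ F i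

/-- `F 0, …, F (r-1)` is a `k`-shelling order: for each `j > 0`, the subcomplex
`⟨F j⟩ ∩ ⟨F 0, …, F (j-1)⟩` is generated by a nonempty set `S` of (maximal) proper faces of
`⟨F j⟩` of dimension `|F j| - k - 1`, and if it has more than one facet then any two
disjoint facets `σ, τ` of it satisfy `F j ⊆ σ ∪ τ`. -/
def IsKShellingOrder {V : Type*} [DecidableEq V] (k : ℕ) {r : ℕ} (F : Fin r → Finset V) :
    Prop :=
  ∀ j : Fin r, 0 < (j : ℕ) →
    ∃ S : Finset (Finset V), S.Nonempty ∧
      (∀ σ ∈ S, σ ⊆ F j ∧ σ.card + k = (F j).card) ∧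
      (∀ G : Finset V, interFace F j G ↔ ∃ σ ∈ S, G ⊆ σ) ∧
      (1 < S.card → ∀ σ ∈ S, ∀ τ ∈ S, Disjoint σ τ → F j ⊆ σ ∪ τ)

/-- A complex is `k`-shellable if its facets can be enumerated by a `k`-shelling order. -/
def IsKShellable {V : Type*} [DecidableEq V] (k : ℕ) (Δ : Set (Finset V)) : Prop :=
  ∃ (r : ℕ) (F : Fin r → Finset V),
    Function.Injective F ∧ Set.range F = facets Δ ∧ IsKShellingOrder k F

/-- Classical shelling order: for each `j > 0` the subcomplex `⟨F j⟩ ∩ ⟨F 0, …, F (j-1)⟩`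
is pure of dimension `dim (F j) - 1`, i.e. every face of it is contained in a face of it of
cardinality `|F j| - 1`. -/
def IsShellingOrder {V : Type*} {r : ℕ} (F : Fin r → Finset V) : Prop :=
  ∀ j : Fin r, 0 < (j : ℕ) → ∀ G : Finset V, interFace F j G →
    ∃ G' : Finset V, interFace F j G' ∧ G ⊆ G' ∧ G'.card + 1 = (F j).card

/-- A complex is shellable if its facets can be enumerated by a shelling order. -/
def IsShellable {V : Type*} (Δ : Set (Finset V)) : Prop :=
  ∃ (r : ℕ) (F : Fin r → Finset V),
    Function.Injective F ∧ Set.range F = facets Δ ∧ IsShellingOrder F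

/-- The expansion `F^k` of a finite set of vertices with respect to `k`. -/
def expandSet {V : Type*} (k : ℕ) (F : Finset V) : Finset (V × Fin k) :=
  F ×ˢ Finset.univ

/-- The expansion `Δ^k` of a simplicial complex with respect to `k`:
the complex generated by the expansions of the facets of `Δ`. -/
def expansion {V : Type*} (k : ℕ) (Δ : Set (Finset V)) : Set (Finset (V × Fin k)) :=
  {G | ∃ F ∈ facets Δ, G ⊆ expandSet k F}

/-- The independence complex of a graph: faces are the independent sets. -/
def indepComplex {V : Type*} (G : SimpleGraph V) : Set (Finset V) :=
  {F | ∀ x ∈ F, ∀ y ∈ F, ¬ G.Adj x y}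

/-- The closed neighborhood `N_G[S]` of a set of vertices. -/
def closedNbhd {V : Type*} (G : SimpleGraph V) (S : Set V) : Set V :=
  ⋃ x ∈ S, insert x (G.neighborSet x)

/-- The independence complex of the induced subgraph of `G` on `A`, viewed inside the
ambient vertex set: its faces are the independent sets of `G` contained in `A`. -/
def inducedIndep {V : Type*} (G : SimpleGraph V) (A : Set V) : Set (Finset V) :=
  {F | ↑F ⊆ A ∧ F ∈ indepComplex G}

/-!
Duplicating vertices pulls the independence complex back along the projection `V × Fin k → V`, and
the facets of the pulled-back complex are the sets `F ×ˢ univ` for `F` a facet of the original one.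
So the two complexes have the same enumerations of facets, and codimension is multiplied by `k`:
the intersections with earlier facets are pure of codimension `1` before expansion if and only if
they are pure of codimension `k` after it. The covering condition on disjoint `σ` and `τ` is then
automatic, because two distinct sets of codimension one in `F j` already have union `F j`.
-/

section Expansion

variable {V : Type*} {k r : ℕ}

theorem card_expandSet (k : ℕ) (F : Finset V) : (expandSet k F).card = F.card * k := by
  simp [expandSet]

variable [DecidableEq V]

theorem expandSet_union (k : ℕ) (F H : Finset V) :
    expandSet k (F ∪ H) = expandSet k F ∪ expandSet k H :=
  Finset.union_product

theorem subset_expandSet_iff {F : Finset V} {H : Finset (V × Fin k)} :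
    H ⊆ expandSet k F ↔ H.image Prod.fst ⊆ F := by
  simp [Finset.subset_iff, expandSet]

theorem subset_expandSet_image_fst (H : Finset (V × Fin k)) :
    H ⊆ expandSet k (H.image Prod.fst) :=
  subset_expandSet_iff.2 subset_rfl

theorem interFace_expandSet_comp_iff {F : Fin r → Finset V} {j : Fin r} {H : Finset (V × Fin k)} :
    interFace (expandSet k ∘ F) j H ↔ interFace F j (H.image Prod.fst) := by
  simp only [interFace, Function.comp_apply, subset_expandSet_iff]

variable [NeZero k]

theorem image_fst_expandSet (F : Finset V) : (expandSet k F).image Prod.fst = F :=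
  Finset.product_image_fst Finset.univ_nonempty

theorem facets_preimage_image_fst (Δ : Set (Finset V)) :
    facets (Finset.image Prod.fst ⁻¹' Δ) = expandSet k '' facets Δ := by
  have expandSet_mem {F : Finset V} (hF : F ∈ Δ) :
      expandSet k F ∈ Finset.image Prod.fst ⁻¹' Δ := by
    rwa [Set.mem_preimage, image_fst_expandSet]
  ext H
  constructor
  · rintro ⟨hH, hmax⟩
    have hH_eq : H = expandSet k (H.image Prod.fst) :=
      hmax _ (expandSet_mem hH) (subset_expandSet_image_fst H)
    refine ⟨H.image Prod.fst, ⟨hH, fun K hK hHK => ?_⟩, hH_eq.symm⟩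
    rw [hmax _ (expandSet_mem hK) (subset_expandSet_iff.2 hHK), image_fst_expandSet]
  · rintro ⟨F, ⟨hF, hmax⟩, rfl⟩
    refine ⟨expandSet_mem hF, fun H hH hFH => hFH.antisymm (subset_expandSet_iff.2 ?_)⟩
    have hF_sub : F ⊆ H.image Prod.fst := by
      simpa only [image_fst_expandSet] using Finset.image_subset_image (f := Prod.fst) hFH
    exact (hmax _ hH hF_sub).ge

end Expansion

theorem expandSet_injective {V : Type*} {k : ℕ} [NeZero k] :
    Function.Injective (expandSet k : Finset V → Finset (V × Fin k)) := by
  classical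
  exact Function.LeftInverse.injective image_fst_expandSet

theorem indepComplex_comap {V W : Type*} [DecidableEq V] (f : W → V) (G : SimpleGraph V) :
    indepComplex (G.comap f) = Finset.image f ⁻¹' indepComplex G := by
  ext H
  simp [indepComplex]

theorem union_eq_of_card_add_one {α : Type*} [DecidableEq α] {A σ τ : Finset α}
    (hσ : σ ⊆ A) (hτ : τ ⊆ A) (hσ_card : σ.card + 1 = A.card) (hτ_card : τ.card + 1 = A.card)
    (hne : σ ≠ τ) : σ ∪ τ = A := by
  have covBy {ρ : Finset α} (hρ : ρ ⊆ A) (hρ_card : ρ.card + 1 = A.card) : ρ ⋖ A := by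
    refine Finset.covBy_iff_card_sdiff_eq_one.2 ⟨hρ, ?_⟩
    rw [Finset.card_sdiff_of_subset hρ, ← hρ_card, Nat.add_sub_cancel_left]
  exact (covBy hσ hσ_card).wcovBy.sup_eq (covBy hτ hτ_card).wcovBy hne

/-- For each `j > 0` the subcomplex `⟨F j⟩ ∩ ⟨F 0, …, F (j-1)⟩` is pure of codimension `c` in
`⟨F j⟩`. The case `c = 1` is, by definition, `IsShellingOrder F`. -/
def HasPureIntersections {V : Type*} (c : ℕ) {r : ℕ} (F : Fin r → Finset V) : Prop :=
  ∀ j : Fin r, 0 < (j : ℕ) → ∀ G : Finset V, interFace F j G →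
    ∃ G' : Finset V, interFace F j G' ∧ G ⊆ G' ∧ G'.card + c = (F j).card

section Shelling

variable {V : Type*} {c k r : ℕ} {F : Fin r → Finset V} {j : Fin r}

theorem interFace.mono {G H : Finset V} (hH : interFace F j H) (hGH : G ⊆ H) : interFace F j G :=
  let ⟨hHj, i, hij, hHi⟩ := hH
  ⟨hGH.trans hHj, i, hij, hGH.trans hHi⟩

theorem interFace_empty (hj : 0 < (j : ℕ)) : interFace F j ∅ :=
  ⟨Finset.empty_subset _, ⟨0, by lia⟩, hj, Finset.empty_subset _⟩

section Purity

variable [NeZero k]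

theorem interFace_expandSet_comp_expandSet_iff {G : Finset V} :
    interFace (expandSet k ∘ F) j (expandSet k G) ↔ interFace F j G := by
  classical
  rw [interFace_expandSet_comp_iff, image_fst_expandSet]

theorem HasPureIntersections.exists_eq_expandSet
    (hF : HasPureIntersections (c * k) (expandSet k ∘ F)) (hj : 0 < (j : ℕ))
    {σ : Finset (V × Fin k)} (hσ : interFace (expandSet k ∘ F) j σ)
    (hσ_card : σ.card + c * k = (expandSet k (F j)).card) :
    ∃ ρ : Finset V, interFace F j ρ ∧ ρ.card + c = (F j).card ∧ σ = expandSet k ρ := by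
  classical
  have hρ : interFace F j (σ.image Prod.fst) := interFace_expandSet_comp_iff.1 hσ
  have hσρ : σ = expandSet k (σ.image Prod.fst) := by
    -- Purity bounds the cardinality of the face on the right by that of `σ`.
    obtain ⟨τ, -, hρτ, hτ_card⟩ := hF j hj _ (interFace_expandSet_comp_expandSet_iff.2 hρ)
    refine Finset.eq_of_subset_of_card_le (subset_expandSet_image_fst σ) ?_
    have hτσ : τ.card = σ.card := Nat.add_right_cancel (hτ_card.trans hσ_card.symm)
    exact (Finset.card_le_card hρτ).trans hτσ.le
  refine ⟨_, hρ, Nat.eq_of_mul_eq_mul_right (NeZero.pos k) ?_, hσρ⟩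
  rw [Nat.add_mul, ← card_expandSet, ← hσρ, hσ_card, card_expandSet]

theorem hasPureIntersections_expandSet_comp_iff :
    HasPureIntersections (c * k) (expandSet k ∘ F) ↔ HasPureIntersections c F := by
  classical
  refine ⟨fun hF j hj G hG => ?_, fun hF j hj H hH => ?_⟩
  · obtain ⟨σ, hσ, hGσ, hσ_card⟩ := hF j hj _ (interFace_expandSet_comp_expandSet_iff.2 hG)
    obtain ⟨ρ, hρ, hρ_card, rfl⟩ := hF.exists_eq_expandSet hj hσ hσ_card
    rw [subset_expandSet_iff, image_fst_expandSet] at hGσ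
    exact ⟨ρ, hρ, hGσ, hρ_card⟩
  · obtain ⟨ρ, hρ, hHρ, hρ_card⟩ := hF j hj _ (interFace_expandSet_comp_iff.1 hH)
    refine ⟨expandSet k ρ, interFace_expandSet_comp_expandSet_iff.2 hρ,
      subset_expandSet_iff.2 hHρ, ?_⟩
    rw [Function.comp_apply, card_expandSet, card_expandSet, ← hρ_card, Nat.add_mul]

end Purity

variable [DecidableEq V]

theorem IsKShellingOrder.hasPureIntersections (hF : IsKShellingOrder k F) :
    HasPureIntersections k F := by
  intro j hj G hG
  obtain ⟨S, -, hS, hgen, -⟩ := hF j hj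
  obtain ⟨σ, hσ, hGσ⟩ := (hgen G).1 hG
  exact ⟨σ, (hgen σ).2 ⟨σ, hσ, subset_rfl⟩, hGσ, (hS σ hσ).2⟩

theorem HasPureIntersections.isKShellingOrder (hF : HasPureIntersections k F)
    (hcover : ∀ j : Fin r, 0 < (j : ℕ) → ∀ σ τ : Finset V, interFace F j σ → interFace F j τ →
      σ.card + k = (F j).card → τ.card + k = (F j).card → σ ≠ τ → Disjoint σ τ → F j ⊆ σ ∪ τ) :
    IsKShellingOrder k F := by
  classical
  intro j hj
  let S := {σ ∈ (F j).powerset | interFace F j σ ∧ σ.card + k = (F j).card}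
  have mem_S {σ : Finset V} : σ ∈ S ↔ interFace F j σ ∧ σ.card + k = (F j).card := by
    rw [Finset.mem_filter, Finset.mem_powerset, and_iff_right_of_imp fun h => h.1.1]
  have subset_mem_S {G : Finset V} (hG : interFace F j G) : ∃ σ ∈ S, G ⊆ σ :=
    let ⟨σ, hσ, hGσ, hσ_card⟩ := hF j hj G hG
    ⟨σ, mem_S.2 ⟨hσ, hσ_card⟩, hGσ⟩
  refine ⟨S, ?_, fun σ hσ => ?_, fun G => ⟨subset_mem_S, ?_⟩, fun hS σ hσ τ hτ hdisj => ?_⟩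
  · obtain ⟨σ, hσ, -⟩ := subset_mem_S (interFace_empty hj)
    exact ⟨σ, hσ⟩
  · exact ⟨(mem_S.1 hσ).1.1, (mem_S.1 hσ).2⟩
  · rintro ⟨σ, hσ, hGσ⟩
    exact (mem_S.1 hσ).1.mono hGσ
  · have hne : σ ≠ τ := by
      -- A set disjoint from itself is empty, and then `∅` is the only member of `S`.
      rintro rfl
      obtain ⟨ρ, hρ, hρσ⟩ := Finset.exists_mem_ne hS σ
      have hcard : ρ.card = σ.card := by linarith [(mem_S.1 hρ).2, (mem_S.1 hσ).2]
      obtain rfl : σ = ∅ := disjoint_self.1 hdisj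
      exact hρσ (Finset.card_eq_zero.1 hcard)
    obtain ⟨hσ, hσ_card⟩ := mem_S.1 hσ
    obtain ⟨hτ, hτ_card⟩ := mem_S.1 hτ
    exact hcover j hj σ τ hσ hτ hσ_card hτ_card hne hdisj

theorem isKShellingOrder_expandSet_comp_iff [NeZero k] :
    IsKShellingOrder k (expandSet k ∘ F) ↔ IsShellingOrder F := by
  have hpure : HasPureIntersections (1 * k) (expandSet k ∘ F) ↔ IsShellingOrder F :=
    hasPureIntersections_expandSet_comp_iff
  rw [← hpure]
  refine ⟨fun hF => by simpa only [one_mul] using hF.hasPureIntersections, fun hF => ?_⟩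
  refine HasPureIntersections.isKShellingOrder (by simpa only [one_mul] using hF) ?_
  intro j hj σ τ hσ hτ hσ_card hτ_card hne _
  obtain ⟨σ', hσ', hσ'_card, rfl⟩ := hF.exists_eq_expandSet hj hσ (by rwa [one_mul])
  obtain ⟨τ', hτ', hτ'_card, rfl⟩ := hF.exists_eq_expandSet hj hτ (by rwa [one_mul])
  have hunion : σ' ∪ τ' = F j :=
    union_eq_of_card_add_one hσ'.1 hτ'.1 hσ'_card hτ'_card (ne_of_apply_ne _ hne)
  rw [← expandSet_union, hunion, Function.comp_apply]

end Shelling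

theorem shellable_iff_duplicate_kShellable_general {V : Type*} [DecidableEq V]
    (Δ : Set (Finset V)) (k : ℕ) (hk : 1 ≤ k) :
    IsShellable Δ ↔
      IsKShellable k (Finset.image (Prod.fst : V × Fin k → V) ⁻¹' Δ) := by
  have : NeZero k := ⟨Nat.one_le_iff_ne_zero.1 hk⟩
  rw [IsKShellable, facets_preimage_image_fst]
  constructor
  · rintro ⟨r, F, hinj, hrange, hF⟩
    exact ⟨r, expandSet k ∘ F, expandSet_injective.comp hinj, by rw [Set.range_comp, hrange],
      isKShellingOrder_expandSet_comp_iff.2 hF⟩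
  · rintro ⟨r, F', hinj, hrange, hF'⟩
    obtain ⟨F, rfl⟩ : ∃ F, F' = expandSet k ∘ F :=
      Set.range_subset_range_iff_exists_comp.1 (hrange.trans_subset (Set.image_subset_range _ _))
    rw [Set.range_comp] at hrange
    exact ⟨r, F, hinj.of_comp, expandSet_injective.image_injective hrange,
      isKShellingOrder_expandSet_comp_iff.1 hF'⟩

/-- Theorem: a graph `G` is shellable iff the graph `G'` obtained from `G` by duplicating
each vertex `k - 1` times is `k`-shellable (shellability of a graph means shellability of
its independence complex). -/
theorem shellable_iff_duplicate_kShellable {V : Type*} [DecidableEq V] [Fintype V]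
    (G : SimpleGraph V) (k : ℕ) (hk : 1 ≤ k) :
    IsShellable (indepComplex G) ↔
      IsKShellable k (indepComplex (SimpleGraph.comap (Prod.fst : V × Fin k → V) G)) := by
  rw [indepComplex_comap]
  exact shellable_iff_duplicate_kShellable_general (indepComplex G) k hk
end

section
/- Let G be a simple graph and let S, T ⊆ V(G), where T is a nonempty independent set of G with T ∩ S = ∅ and N_G[T] ⊆ N_G[S]. Then no independent set of the induced subgraph G \ N_G[S] is a maximal independent set of the induced subgraph G \ S. -/
/-- `F` is a maximal element of a collection `𝒜` of finite sets. -/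
def MaximalIn {V : Type*} (𝒜 : Set (Finset V)) (F : Finset V) : Prop :=
  F ∈ 𝒜 ∧ ∀ F' ∈ 𝒜, F ⊆ F' → F' = F

section

variable {V : Type*} {G : SimpleGraph V}

theorem subset_closedNbhd {S : Set V} : S ⊆ closedNbhd G S :=
  fun _ hs => Set.mem_biUnion hs (Set.mem_insert _ _)

theorem mem_closedNbhd_of_adj {S : Set V} {s x : V} (hs : s ∈ S) (h : G.Adj s x) :
    x ∈ closedNbhd G S :=
  Set.mem_biUnion hs (Set.mem_insert_of_mem s h)

theorem insert_mem_indepComplex_iff [DecidableEq V] {v : V} {F : Finset V} :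
    insert v F ∈ indepComplex G ↔ F ∈ indepComplex G ∧ ∀ x ∈ F, ¬ G.Adj v x := by
  simp only [indepComplex, Set.mem_ofPred_eq, Finset.forall_mem_insert, G.irrefl,
    not_false_eq_true, true_and, forall_and, G.adj_comm _ v, and_self_left, and_comm]

theorem insert_mem_inducedIndep_iff [DecidableEq V] {A : Set V} {v : V} {F : Finset V} :
    insert v F ∈ inducedIndep G A ↔
      v ∈ A ∧ F ∈ inducedIndep G A ∧ ∀ x ∈ F, ¬ G.Adj v x := by
  simp only [inducedIndep, Set.mem_ofPred_eq, Finset.coe_insert, Set.insert_subset_iff,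
    insert_mem_indepComplex_iff, and_assoc]

theorem MaximalIn.mem_of_insert_mem [DecidableEq V] {𝒜 : Set (Finset V)} {F : Finset V} {v : V}
    (hF : MaximalIn 𝒜 F) (hv : insert v F ∈ 𝒜) : v ∈ F :=
  Finset.insert_eq_self.mp (hF.2 _ hv (Finset.subset_insert v F))

theorem not_maximalIn_inducedIndep_of_disjoint_closedNbhd {A T : Set V} {F : Finset V}
    (hTA : (T ∩ A).Nonempty) (hFT : Disjoint ↑F (closedNbhd G T)) :
    ¬ MaximalIn (inducedIndep G A) F := by
  classical
  intro hF
  obtain ⟨t, htT, htA⟩ := hTA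
  have hadj : ∀ x ∈ F, ¬ G.Adj t x := fun _ hx h =>
    Set.disjoint_left.mp hFT hx (mem_closedNbhd_of_adj htT h)
  have htF : t ∈ F := hF.mem_of_insert_mem (insert_mem_inducedIndep_iff.mpr ⟨htA, hF.1, hadj⟩)
  exact Set.disjoint_left.mp hFT htF (subset_closedNbhd htT)

theorem not_maximal_of_closedNbhd_subset_general {S T : Set V} (hTS : (T \ S).Nonempty)
    (hN : closedNbhd G T ⊆ closedNbhd G S) :
    ∀ F ∈ inducedIndep G (closedNbhd G S)ᶜ, ¬ MaximalIn (inducedIndep G Sᶜ) F :=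
  fun _ hF => not_maximalIn_inducedIndep_of_disjoint_closedNbhd hTS
    ((Set.subset_compl_iff_disjoint_right.mp hF.1).mono_right hN)

end

/-- Lemma: let `T` be a nonempty independent set of `G` with `T ∩ S = ∅` and
`N_G[T] ⊆ N_G[S]`.  Then no independent set of the induced subgraph `G \ N_G[S]` is a
maximal independent set of the induced subgraph `G \ S`. -/
theorem not_maximal_of_closedNbhd_subset {V : Type*} [DecidableEq V] [Fintype V]
    (G : SimpleGraph V) (S T : Finset V)
    (hT : T ∈ indepComplex G) (hTne : T.Nonempty) (hTS : Disjoint T S)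
    (hN : closedNbhd G ↑T ⊆ closedNbhd G ↑S) :
    ∀ F ∈ inducedIndep G (closedNbhd G ↑S)ᶜ, ¬ MaximalIn (inducedIndep G (↑S)ᶜ) F := by
  obtain ⟨t, ht⟩ := hTne
  exact not_maximal_of_closedNbhd_subset_general ⟨t, ht, Finset.disjoint_left.mp hTS ht⟩ hN
end
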